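/- arXiv:1910.05541 — 3 statements merged into one kernel-verified Lean document; each statement's English description precedes it below -/
import Mathlib

section
/- Let M and N be nonempty closed bounded convex subsets of a Hilbert space X and let F : M ∪ N → M ∪ N satisfy (i) F(M) ⊆ N and F(N) ⊆ M, and (ii) ‖Fw − Fz‖ ≤ ‖w − z‖ for all w ∈ M, z ∈ N. Suppose F(M) is contained in a compact subset of N. Fix ε ∈ (0, 1/2) and sequences η_n, δ_n ∈ (ε, 1−ε). Then for any w_0 ∈ M, the sequence defined by w_{n+1} = (1−η_n) w_n + η_n P_M(F((1−δ_n) w_n + δ_n P_M F w_n)) converges to a point w ∈ M_0 satisfying ‖w − Fw‖ = d(M,N), provided that d(w_n, M_0) → 0. -/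
/-!
Let `d` be the distance between `M` and `N`. Compactness of `F '' M` makes `d` attained: if
`‖a n - b n‖ → d`, then `‖F (a n) - F (b n)‖ → d` as well, so a cluster point `c` of `F (a n)` is at
distance `d` from `M`. This gives a vector `h` of norm `d` leading from a point of `M` to a point
of `N`, and convexity yields `‖h‖² ≤ ⟪h, z - y⟫` for all `y ∈ M`, `z ∈ N`. Everything else rests
on this inequality: pairs realising the distance are exactly the pairs `(x, x + h)`, the
proximal set `M₀` is `{x ∈ M | x + h ∈ N}`, on it `F x = F (x + h) + h`, and `x ↦ F (x + h)` is a
nonexpansive self-map of `M₀` with relatively compact range, hence it has a fixed point `p`.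

The map `T = P_M ∘ F` need not be nonexpansive on `M`, but it never increases the distance to the
*proximal partner* `p + h` of a fixed point `p` (`norm_proj_sub_le`). So the iteration is Fejér
monotone with respect to `p + h`, and the Hilbert space identity for `‖(1 - t) x + t y‖²` gives
`w n - T (w n) → 0`. By compactness `w` has a cluster point `x`, which lies in `M₀` because
`d(w n, M₀) → 0`, and is again a fixed point. Hence `‖w n - (x + h)‖` is antitone with a
subsequence tending to `‖h‖`; since `‖y - x‖² + ‖h‖² ≤ ‖y - (x + h)‖²` on `M`, `w n → x`.
-/

open Filter Topology

open scoped RealInnerProductSpace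

section Ishikawa

variable {X : Type*} [NormedAddCommGroup X] [InnerProductSpace ℝ X]

/-- The variational inequality characterising the nearest point of a convex set. -/
lemma inner_le_zero_of_nearest {M : Set X} (hM : Convex ℝ M) {x u : X} (hu : u ∈ M)
    (hmin : ∀ y ∈ M, ‖x - u‖ ≤ ‖x - y‖) {y : X} (hy : y ∈ M) : ⟪x - u, y - u⟫ ≤ 0 := by
  refine (norm_eq_iInf_iff_real_inner_le_zero hM hu).1 ?_ y hy
  have : Nonempty M := ⟨⟨u, hu⟩⟩
  refine le_antisymm (le_ciInf fun z => hmin z z.2) ?_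
  exact ciInf_le ⟨0, by rintro _ ⟨z, rfl⟩; exact norm_nonneg _⟩ (⟨u, hu⟩ : M)

lemma continuous_nearest {M : Set X} (hM : Convex ℝ M) {P : X → X}
    (hP : ∀ x, P x ∈ M ∧ ∀ y ∈ M, ‖x - P x‖ ≤ ‖x - y‖) : Continuous P := by
  refine (LipschitzWith.of_dist_le_mul (K := 1) fun x y => ?_).continuous
  rw [dist_eq_norm, dist_eq_norm, NNReal.coe_one, one_mul]
  have h1 := inner_le_zero_of_nearest hM (hP x).1 (hP x).2 (hP y).1
  have h2 := inner_le_zero_of_nearest hM (hP y).1 (hP y).2 (hP x).1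
  have h3 : ‖P x - P y‖ ^ 2 = ⟪x - y, P x - P y⟫ + ⟪x - P x, P y - P x⟫
      + ⟪y - P y, P x - P y⟫ := by
    rw [← real_inner_self_eq_norm_sq]
    simp only [inner_sub_left, inner_sub_right]
    ring
  have h4 := real_inner_le_norm (x - y) (P x - P y)
  by_contra! hlt
  nlinarith [norm_nonneg (x - y), norm_nonneg (P x - P y)]

/-- If `h` realises the distance between convex sets, the two sets are separated by the slab
orthogonal to `h`. -/
lemma norm_sq_le_inner {M N : Set X} (hM : Convex ℝ M) (hN : Convex ℝ N) {a h : X}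
    (ha : a ∈ M) (hb : a + h ∈ N) (hmin : ∀ y ∈ M, ∀ z ∈ N, ‖h‖ ≤ ‖y - z‖) {y z : X}
    (hy : y ∈ M) (hz : z ∈ N) : ‖h‖ ^ 2 ≤ ⟪h, z - y⟫ := by
  have h1 : ⟪a + h - a, y - a⟫ ≤ 0 := inner_le_zero_of_nearest hM ha (fun y hy => by
    simpa [norm_sub_rev y] using hmin y hy _ hb) hy
  have h2 : ⟪a - (a + h), z - (a + h)⟫ ≤ 0 := inner_le_zero_of_nearest hN hb (fun z hz => by
    simpa using hmin a ha z hz) hz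
  rw [← real_inner_self_eq_norm_sq]
  rw [add_sub_cancel_left] at h1
  rw [sub_add_cancel_left] at h2
  simp only [inner_sub_right, inner_add_right, inner_neg_left] at *
  linarith

/-- A pair of points satisfying the slab inequality whose distance is at most `‖h‖` differs exactly
by `h`. -/
lemma eq_add_of_norm_le {h y z : X} (hK : ‖h‖ ^ 2 ≤ ⟪h, z - y⟫) (hle : ‖z - y‖ ≤ ‖h‖) :
    z = y + h := by
  have h1 := norm_sub_sq_real (z - y) h
  rw [real_inner_comm] at h1
  have h2 : ‖z - y‖ ^ 2 ≤ ‖h‖ ^ 2 := by gcongr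
  have h3 : ‖z - y - h‖ = 0 := by
    apply pow_eq_zero_iff (two_ne_zero) |>.1
    nlinarith [sq_nonneg ‖z - y - h‖]
  have h4 := norm_eq_zero.1 h3
  rw [sub_sub, sub_eq_zero] at h4
  exact h4

/-- If `u` is the nearest point to `v ∈ N` of a convex set `M` containing `p` (only the variational
inequality at `p` is needed), then `u` is no farther from the partner `p + h` of `p` than `v` is
from `p`. -/
lemma norm_proj_sub_le {u v p h : X} (hvar : ⟪v - u, p - u⟫ ≤ 0)
    (hK : ‖h‖ ^ 2 ≤ ⟪h, v - p⟫) : ‖u - (p + h)‖ ≤ ‖v - p‖ := by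
  refine (sq_le_sq₀ (norm_nonneg _) (norm_nonneg _)).1 ?_
  -- The difference of squares is a sum of nonnegative terms, one of them `‖v - u - h‖²`.
  have h1 : ‖v - p‖ ^ 2 - ‖u - (p + h)‖ ^ 2
      = ‖v - u - h‖ ^ 2 + 2 * (⟪h, v - p⟫ - ‖h‖ ^ 2) - 2 * ⟪v - u, p - u⟫ := by
    simp only [← real_inner_self_eq_norm_sq, inner_sub_left, inner_sub_right, inner_add_left,
      inner_add_right, real_inner_comm p v, real_inner_comm u v, real_inner_comm h v,
      real_inner_comm p u, real_inner_comm h u, real_inner_comm h p]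
    ring
  nlinarith [sq_nonneg ‖v - u - h‖]

/-- The strong convexity identity for the squared distance to `q`. -/
lemma norm_convex_comb_sq (x y q : X) (t : ℝ) :
    ‖(1 - t) • x + t • y - q‖ ^ 2
      = (1 - t) * ‖x - q‖ ^ 2 + t * ‖y - q‖ ^ 2 - t * (1 - t) * ‖x - y‖ ^ 2 := by
  simp only [← real_inner_self_eq_norm_sq, inner_sub_left, inner_sub_right, inner_add_left,
      inner_add_right, real_inner_smul_left, real_inner_smul_right,
      real_inner_comm x y, real_inner_comm x q, real_inner_comm y q]
  ring

/-- The one-step estimate for the Ishikawa scheme of a map that does not increase the distance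
to `q`. -/
lemma ishikawa_step {M : Set X} (hM : Convex ℝ M) {T : X → X} (hT : ∀ x ∈ M, T x ∈ M) {q : X}
    (hq : ∀ x ∈ M, ‖T x - q‖ ≤ ‖x - q‖) {ε s t : ℝ} (hε : 0 < ε) (hs : s ∈ Set.Ioo ε (1 - ε))
    (ht : t ∈ Set.Ioo ε (1 - ε)) {x : X} (hx : x ∈ M) :
    (1 - s) • x + s • T ((1 - t) • x + t • T x) ∈ M ∧
    ‖(1 - s) • x + s • T ((1 - t) • x + t • T x) - q‖ ^ 2
      ≤ ‖x - q‖ ^ 2 - ε ^ 3 * ‖x - T x‖ ^ 2 := by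
  obtain ⟨hs1, hs2⟩ := hs
  obtain ⟨ht1, ht2⟩ := ht
  set y := (1 - t) • x + t • T x with hy
  have hyM : y ∈ M := hM hx (hT x hx) (by linarith) (by linarith) (by ring)
  refine ⟨hM hx (hT y hyM) (by linarith) (by linarith) (by ring), ?_⟩
  have h1 := norm_convex_comb_sq x (T y) q s
  have h2 := norm_convex_comb_sq x (T x) q t
  rw [← hy] at h2
  have h3 : ‖T y - q‖ ^ 2 ≤ ‖y - q‖ ^ 2 := by gcongr; exact hq y hyM
  have h4 : ‖T x - q‖ ^ 2 ≤ ‖x - q‖ ^ 2 := by gcongr; exact hq x hx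
  have h5 : 0 ≤ s * (1 - s) * ‖x - T y‖ ^ 2 :=
    mul_nonneg (mul_nonneg (by linarith) (by linarith)) (sq_nonneg _)
  have h6 : t * ‖T x - q‖ ^ 2 ≤ t * ‖x - q‖ ^ 2 :=
    mul_le_mul_of_nonneg_left h4 (by linarith)
  have h7 : s * ‖T y - q‖ ^ 2 ≤ s * (‖x - q‖ ^ 2 - t * (1 - t) * ‖x - T x‖ ^ 2) :=
    mul_le_mul_of_nonneg_left (by linarith) (by linarith)
  have h8 : ε ^ 3 ≤ s * (t * (1 - t)) := by
    have e1 : ε * ε ≤ t * (1 - t) := mul_le_mul ht1.le (by linarith) hε.le (by linarith)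
    calc ε ^ 3 = ε * (ε * ε) := by ring
      _ ≤ s * (t * (1 - t)) := mul_le_mul hs1.le e1 (by positivity) (by linarith)
  have h9 : ε ^ 3 * ‖x - T x‖ ^ 2 ≤ s * (t * (1 - t)) * ‖x - T x‖ ^ 2 := by gcongr
  linarith

/-- Fejér monotonicity and asymptotic regularity of the Ishikawa scheme. -/
lemma ishikawa_fejer {M : Set X} (hM : Convex ℝ M) {T : X → X} (hT : ∀ x ∈ M, T x ∈ M) {q : X}
    (hq : ∀ x ∈ M, ‖T x - q‖ ≤ ‖x - q‖) {ε : ℝ} (hε : 0 < ε) {η δ : ℕ → ℝ}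
    (hη : ∀ n, η n ∈ Set.Ioo ε (1 - ε)) (hδ : ∀ n, δ n ∈ Set.Ioo ε (1 - ε))
    {w : ℕ → X} (hwM : ∀ n, w n ∈ M)
    (hw : ∀ n, w (n + 1) =
      (1 - η n) • w n + η n • T ((1 - δ n) • w n + δ n • T (w n))) :
    Antitone (fun n => ‖w n - q‖ ^ 2) ∧ Tendsto (fun n => w n - T (w n)) atTop (𝓝 0) := by
  have hstep : ∀ n, ‖w (n + 1) - q‖ ^ 2 ≤ ‖w n - q‖ ^ 2 - ε ^ 3 * ‖w n - T (w n)‖ ^ 2 := by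
    intro n
    rw [hw n]
    exact (ishikawa_step hM hT hq hε (hη n) (hδ n) (hwM n)).2
  have hε3 : 0 < ε ^ 3 := by positivity
  have hanti : Antitone (fun n => ‖w n - q‖ ^ 2) :=
    antitone_nat_of_succ_le fun n => by
      have := hstep n
      have : 0 ≤ ε ^ 3 * ‖w n - T (w n)‖ ^ 2 := by positivity
      linarith
  refine ⟨hanti, ?_⟩
  have hlim := tendsto_atTop_ciInf hanti ⟨0, by rintro _ ⟨n, rfl⟩; positivity⟩
  have hdiff := (hlim.sub (hlim.comp (tendsto_add_atTop_nat 1))).div_const (ε ^ 3)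
  rw [sub_self, zero_div] at hdiff
  have hsq : Tendsto (fun n => ‖w n - T (w n)‖ ^ 2) atTop (𝓝 0) := by
    refine squeeze_zero (fun n => sq_nonneg _) (fun n => ?_) hdiff
    rw [le_div_iff₀ hε3]
    have := hstep n
    simp only [Function.comp]
    linarith
  rw [tendsto_zero_iff_norm_tendsto_zero]
  have := hsq.sqrt
  simpa [Real.sqrt_sq (norm_nonneg _)] using this

/-- A nonexpansive self-map of a bounded closed convex set with relatively compact range has a
fixed point: the fixed points of the contractions `x ↦ (1 - t) • a + t • S x` are approximate
fixed points of `S` as `t → 1`. -/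
lemma exists_fixedPoint_of_nonexpansive [CompleteSpace X] {A : Set X} (hne : A.Nonempty)
    (hcl : IsClosed A) (hconv : Convex ℝ A) (hb : Bornology.IsBounded A) {S : X → X}
    (hS : ∀ x ∈ A, S x ∈ A) (hSne : ∀ x ∈ A, ∀ y ∈ A, ‖S x - S y‖ ≤ ‖x - y‖)
    (hcpt : ∀ u : ℕ → X, (∀ n, u n ∈ A) →
      ∃ c, ∃ φ : ℕ → ℕ, StrictMono φ ∧ Tendsto (fun n => S (u (φ n))) atTop (𝓝 c)) :
    ∃ p ∈ A, S p = p := by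
  obtain ⟨a, ha⟩ := hne
  obtain ⟨R, hR⟩ := hb.exists_norm_le
  have happrox : ∀ n : ℕ, ∃ x ∈ A, ‖x - S x‖ ≤ (R + R) * (1 / ((n : ℝ) + 1)) := by
    intro n
    set r : ℝ := 1 / ((n : ℝ) + 1) with hr
    have hr0 : 0 < r := by positivity
    have hr1 : r ≤ 1 := by
      rw [hr, div_le_one (by positivity)]
      linarith [(Nat.cast_nonneg n : (0 : ℝ) ≤ n)]
    have : Nonempty A := ⟨⟨a, ha⟩⟩
    have : CompleteSpace A := hcl.completeSpace_coe
    let G : A → A := fun x => ⟨r • a + (1 - r) • S x,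
      hconv ha (hS x x.2) hr0.le (by linarith) (by ring)⟩
    have hG : ContractingWith (Real.toNNReal (1 - r)) G := by
      refine ⟨by rw [← NNReal.coe_lt_coe, Real.coe_toNNReal _ (by linarith)]; simpa using hr0,
        LipschitzWith.of_dist_le_mul fun x y => ?_⟩
      rw [Real.coe_toNNReal _ (by linarith), Subtype.dist_eq, Subtype.dist_eq, dist_eq_norm,
        dist_eq_norm]
      have : ((G x : X) - G y) = (1 - r) • (S x - S y) := by
        simp only [G, smul_sub]; abel
      rw [this, norm_smul, Real.norm_of_nonneg (by linarith)]
      exact mul_le_mul_of_nonneg_left (hSne x x.2 y y.2) (by linarith)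
    let x := ContractingWith.fixedPoint G hG
    have hx : r • a + (1 - r) • S x = (x : X) :=
      congrArg Subtype.val (ContractingWith.fixedPoint_isFixedPt hG)
    refine ⟨x, x.2, ?_⟩
    have h1 : (x : X) - S x = r • (a - S x) := by
      nth_rewrite 1 [← hx]
      rw [sub_smul, one_smul, smul_sub]; abel
    rw [h1, norm_smul, Real.norm_of_nonneg hr0.le, mul_comm]
    gcongr
    exact (norm_sub_le _ _).trans (add_le_add (hR a ha) (hR _ (hS x x.2)))
  choose u huA hu using happrox
  have hu0 : Tendsto (fun n => u n - S (u n)) atTop (𝓝 0) := by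
    refine squeeze_zero_norm hu ?_
    simpa using (tendsto_one_div_add_atTop_nhds_zero_nat (𝕜 := ℝ)).const_mul (R + R)
  obtain ⟨c, φ, hφ, hc⟩ := hcpt u huA
  have huc : Tendsto (fun n => u (φ n)) atTop (𝓝 c) := by
    simpa using (hu0.comp hφ.tendsto_atTop).add hc
  have hcA : c ∈ A := hcl.mem_of_tendsto huc (Eventually.of_forall fun n => huA _)
  refine ⟨c, hcA, tendsto_nhds_unique ?_ hc⟩
  rw [tendsto_iff_norm_sub_tendsto_zero]
  refine squeeze_zero (fun n => norm_nonneg _)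
    (fun n => hSne _ (huA (φ n)) _ hcA) ?_
  exact (tendsto_iff_norm_sub_tendsto_zero).1 huc

/-- The distance between `M` and `N` is attained. The cyclic map moves a minimising sequence into a
compact set, so no weak compactness is needed. -/
lemma exists_proximal_pair {M N : Set X} (hMne : M.Nonempty) (hNne : N.Nonempty)
    {F : X → X} (hFN : ∀ z ∈ N, F z ∈ M)
    (hFne : ∀ w ∈ M, ∀ z ∈ N, ‖F w - F z‖ ≤ ‖w - z‖) {C : Set X} (hCN : C ⊆ N)
    (hC : IsCompact C) (hFC : F '' M ⊆ C) {P : X → X}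
    (hP : ∀ x, P x ∈ M ∧ ∀ y ∈ M, ‖x - P x‖ ≤ ‖x - y‖) {d : ℝ}
    (hd : IsGLB {r : ℝ | ∃ a ∈ M, ∃ b ∈ N, r = ‖a - b‖} d) :
    ∃ a ∈ M, ∃ b ∈ N, ‖a - b‖ = d := by
  obtain ⟨a₀, ha₀⟩ := hMne
  obtain ⟨b₀, hb₀⟩ := hNne
  obtain ⟨r, -, -, hr, hrS⟩ := hd.exists_seq_antitone_tendsto ⟨_, a₀, ha₀, b₀, hb₀, rfl⟩
  choose a ha b hb hab using hrS
  obtain ⟨c, hc, φ, hφ, hlim⟩ := hC.tendsto_subseq (x := fun n => F (a n))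
    fun n => hFC ⟨_, ha n, rfl⟩
  refine ⟨P c, (hP c).1, c, hCN hc, le_antisymm ?_ (hd.1 ⟨_, (hP c).1, _, hCN hc, rfl⟩)⟩
  have h1 : Tendsto (fun n => ‖c - F (a (φ n))‖ + r (φ n)) atTop (𝓝 (0 + d)) := by
    refine Tendsto.add ?_ (hr.comp hφ.tendsto_atTop)
    simpa using (hlim.const_sub c).norm
  rw [zero_add] at h1
  refine ge_of_tendsto' h1 fun n => ?_
  rw [norm_sub_rev]
  calc ‖c - P c‖ ≤ ‖c - F (b (φ n))‖ := (hP c).2 _ (hFN _ (hb _))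
    _ ≤ ‖c - F (a (φ n))‖ + ‖F (a (φ n)) - F (b (φ n))‖ := norm_sub_le_norm_sub_add_norm_sub ..
    _ ≤ _ := by
      gcongr
      exact (hFne _ (ha _) _ (hb _)).trans_eq (hab _).symm

end Ishikawa

/-- Corollary 2.8: for a cyclic relatively nonexpansive map `F` (`F(M) ⊆ N`,
`F(N) ⊆ M`) on bounded closed convex subsets of a Hilbert space, with `F '' M`
contained in a compact subset of `N`, the Ishikawa-type iteration with the
projected map `P_M ∘ F`, started at any `w 0 ∈ M`, converges to a best proximity
point `x ∈ M₀` of `F`, provided `d(w n, M₀) → 0`. -/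
theorem ishikawa_proj_tendsto_bestProximityPoint_of_dist_M0_tendsto_zero
    {X : Type*} [NormedAddCommGroup X] [InnerProductSpace ℝ X] [CompleteSpace X]
    (M N : Set X)
    (hMne : M.Nonempty) (hMb : Bornology.IsBounded M) (hMcl : IsClosed M)
    (hMconv : Convex ℝ M)
    (hNne : N.Nonempty) (hNb : Bornology.IsBounded N) (hNcl : IsClosed N)
    (hNconv : Convex ℝ N)
    (F : X → X) (hFM : ∀ w ∈ M, F w ∈ N) (hFN : ∀ z ∈ N, F z ∈ M)
    (hFne : ∀ w ∈ M, ∀ z ∈ N, ‖F w - F z‖ ≤ ‖w - z‖)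
    (hcpt : ∃ C : Set X, C ⊆ N ∧ IsCompact C ∧ F '' M ⊆ C)
    (PM : X → X)
    (hPM : ∀ x : X, PM x ∈ M ∧ ∀ y ∈ M, ‖x - PM x‖ ≤ ‖x - y‖)
    (ε : ℝ) (hε : ε ∈ Set.Ioo (0 : ℝ) (1 / 2))
    (η δ : ℕ → ℝ)
    (hη : ∀ n, η n ∈ Set.Ioo ε (1 - ε)) (hδ : ∀ n, δ n ∈ Set.Ioo ε (1 - ε))
    (w : ℕ → X) (hw0 : w 0 ∈ M)
    (hw : ∀ n, w (n + 1) =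
      (1 - η n) • w n + η n • PM (F ((1 - δ n) • w n + δ n • PM (F (w n)))))
    (hM0 : Tendsto (fun n => Metric.infDist (w n)
      {x ∈ M | ∃ z ∈ N, ‖x - z‖ = sInf {r : ℝ | ∃ a ∈ M, ∃ b ∈ N, r = ‖a - b‖}})
      atTop (𝓝 0)) :
    ∃ x ∈ {x ∈ M | ∃ z ∈ N, ‖x - z‖ = sInf {r : ℝ | ∃ a ∈ M, ∃ b ∈ N, r = ‖a - b‖}},
      Tendsto w atTop (𝓝 x) ∧
      ‖x - F x‖ = sInf {r : ℝ | ∃ a ∈ M, ∃ b ∈ N, r = ‖a - b‖} := by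
  set d := sInf {r : ℝ | ∃ a ∈ M, ∃ b ∈ N, r = ‖a - b‖} with hd_def
  obtain ⟨C, hCN, hC, hFC⟩ := hcpt
  have hd : IsGLB {r : ℝ | ∃ a ∈ M, ∃ b ∈ N, r = ‖a - b‖} d := by
    obtain ⟨a, ha⟩ := hMne
    obtain ⟨b, hb⟩ := hNne
    exact isGLB_csInf ⟨_, a, ha, b, hb, rfl⟩
      ⟨0, by rintro _ ⟨a, _, b, _, rfl⟩; exact norm_nonneg _⟩
  obtain ⟨a, ha, b, hb, hab⟩ := exists_proximal_pair hMne hNne hFN hFne hCN hC hFC hPM hd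
  obtain ⟨h, rfl⟩ : ∃ h, b = a + h := ⟨b - a, by abel⟩
  have hhd : ‖h‖ = d := by rw [← hab]; simp
  have hK : ∀ y ∈ M, ∀ z ∈ N, ‖h‖ ^ 2 ≤ ⟪h, z - y⟫ := fun y hy z hz =>
    norm_sq_le_inner hMconv hNconv ha hb
      (fun y hy z hz => hhd ▸ hd.1 ⟨y, hy, z, hz, rfl⟩) hy hz
  have hset : {x ∈ M | ∃ z ∈ N, ‖x - z‖ = d} = {x ∈ M | x + h ∈ N} := by
    ext x
    constructor
    · rintro ⟨hx, z, hz, hxz⟩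
      rw [norm_sub_rev] at hxz
      exact ⟨hx, eq_add_of_norm_le (hK x hx z hz) (hxz.trans hhd.symm).le ▸ hz⟩
    · rintro ⟨hx, hz⟩
      exact ⟨hx, _, hz, by simpa using hhd⟩
  rw [hset] at hM0 ⊢
  set A : Set X := {x ∈ M | x + h ∈ N} with hA
  have hAne : A.Nonempty := ⟨a, ha, hb⟩
  have hAcl : IsClosed A :=
    hMcl.inter (hNcl.preimage (continuous_id.add continuous_const))
  have hAconv : Convex ℝ A :=
    hMconv.inter (hNconv.translate_preimage_left h)
  have hAb : Bornology.IsBounded A := hMb.subset fun x hx => hx.1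
  have hPcont := continuous_nearest hMconv hPM
  have hFA : ∀ x ∈ A, F x = F (x + h) + h := fun x hx =>
    eq_add_of_norm_le (hK _ (hFN _ hx.2) _ (hFM _ hx.1))
      ((hFne _ hx.1 _ hx.2).trans_eq (by simp))
  have hSA : ∀ x ∈ A, F (x + h) ∈ A := fun x hx => ⟨hFN _ hx.2, hFA x hx ▸ hFM _ hx.1⟩
  have hSne : ∀ x ∈ A, ∀ y ∈ A, ‖F (x + h) - F (y + h)‖ ≤ ‖x - y‖ := by
    intro x hx y hy
    refine (sq_le_sq₀ (norm_nonneg _) (norm_nonneg _)).1 ?_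
    have h1 := hFne x hx.1 _ hy.2
    rw [hFA x hx, add_sub_right_comm, ← sub_sub] at h1
    have h2 := pow_le_pow_left₀ (norm_nonneg _) h1 2
    rw [norm_add_sq_real, norm_sub_sq_real (x - y)] at h2
    have h3 := hK _ hy.1 _ hx.2
    have h4 := hK _ (hSA y hy).1 _ (hSA x hx).2
    rw [add_sub_right_comm, inner_add_right, real_inner_self_eq_norm_sq, real_inner_comm] at h3 h4
    linarith
  obtain ⟨p, hpA, hp⟩ : ∃ p ∈ A, F (p + h) = p := by
    refine exists_fixedPoint_of_nonexpansive (S := fun x => F (x + h)) hAne hAcl hAconv hAb hSA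
      hSne fun u hu => ?_
    obtain ⟨c, -, φ, hφ, hlim⟩ := hC.tendsto_subseq (x := fun n => F (u n))
      fun n => hFC ⟨_, (hu n).1, rfl⟩
    refine ⟨c - h, φ, hφ, (hlim.sub_const h).congr fun n => ?_⟩
    simp [hFA _ (hu (φ n))]
  have hquasi : ∀ q ∈ A, F (q + h) = q → ∀ x ∈ M, ‖PM (F x) - (q + h)‖ ≤ ‖x - (q + h)‖ := by
    intro q hq hFq x hx
    refine (norm_proj_sub_le (v := F x) ?_ (hK _ hq.1 _ (hFM x hx))).trans ?_
    · exact inner_le_zero_of_nearest hMconv (hPM _).1 (hPM _).2 hq.1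
    · simpa [hFq] using hFne x hx _ hq.2
  have hT : ∀ x ∈ M, PM (F x) ∈ M := fun x _ => (hPM _).1
  have hwM : ∀ n, w n ∈ M := by
    intro n
    induction n with
    | zero => exact hw0
    | succ n ih =>
      rw [hw n]
      exact (ishikawa_step (T := fun x => PM (F x)) hMconv hT (hquasi p hpA hp) hε.1
        (hη n) (hδ n) ih).1
  have hfejer : ∀ q ∈ A, F (q + h) = q → Antitone (fun n => ‖w n - (q + h)‖ ^ 2) ∧
      Tendsto (fun n => w n - PM (F (w n))) atTop (𝓝 0) := fun q hq hFq =>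
    ishikawa_fejer (T := fun x => PM (F x)) hMconv hT (hquasi q hq hFq) hε.1 hη hδ hwM hw
  obtain ⟨c, hcC, φ, hφ, hc⟩ := hC.tendsto_subseq (x := fun n => F (w n))
    fun n => hFC ⟨_, hwM n, rfl⟩
  set x := PM c with hx
  have hwx : Tendsto (fun n => w (φ n)) atTop (𝓝 x) := by
    simpa [Function.comp_def] using
      ((hfejer p hpA hp).2.comp hφ.tendsto_atTop).add ((hPcont.tendsto c).comp hc)
  have hxA : x ∈ A := by
    rw [hAcl.mem_iff_infDist_zero hAne]
    exact tendsto_nhds_unique (((Metric.continuous_infDist_pt A).tendsto x).comp hwx)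
      (hM0.comp hφ.tendsto_atTop)
  -- Passing to the limit in `‖F (w n) - F (x + h)‖ ≤ ‖w n - (x + h)‖` identifies `c`.
  have hcS : c = F (x + h) + h := by
    refine eq_add_of_norm_le (hK _ (hFN _ hxA.2) _ (hCN hcC)) ?_
    have := le_of_tendsto_of_tendsto' (hc.sub_const (F (x + h))).norm
      (hwx.sub_const (x + h)).norm fun n => hFne _ (hwM _) _ hxA.2
    simpa using this
  have hSx : F (x + h) = x := by
    have h1 := (hPM c).2 _ (hFN _ hxA.2)
    have h2 : c = x + h := eq_add_of_norm_le (hK _ hxA.1 _ (hCN hcC)) (h1.trans_eq (by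
      rw [hcS, add_sub_cancel_left]))
    exact add_right_cancel (hcS.symm.trans h2)
  refine ⟨x, hxA, ?_, by rw [hFA x hxA, hSx]; simpa using hhd⟩
  have hanti := (hfejer x hxA hSx).1
  have hlim : Tendsto (fun n => ‖w n - (x + h)‖ ^ 2) atTop (𝓝 (‖h‖ ^ 2)) := by
    have h1 := tendsto_atTop_ciInf hanti ⟨0, by rintro _ ⟨n, rfl⟩; positivity⟩
    have h2 : Tendsto (fun n => ‖w (φ n) - (x + h)‖ ^ 2) atTop (𝓝 (‖h‖ ^ 2)) := by
      simpa using ((hwx.sub_const (x + h)).norm.pow 2)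
    rwa [tendsto_nhds_unique (h1.comp hφ.tendsto_atTop) h2] at h1
  rw [tendsto_iff_norm_sub_tendsto_zero]
  have hsq : Tendsto (fun n => ‖w n - x‖ ^ 2) atTop (𝓝 0) := by
    refine squeeze_zero (fun n => sq_nonneg _) (fun n => ?_)
      (sub_self (‖h‖ ^ 2) ▸ hlim.sub_const (‖h‖ ^ 2))
    have h1 := norm_sub_sq_real (w n - x) h
    have h2 := hK _ (hwM n) _ hxA.2
    have h3 : x + h - w n = h - (w n - x) := by abel
    rw [h3, inner_sub_right, real_inner_self_eq_norm_sq, real_inner_comm] at h2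
    rw [← sub_sub]
    linarith
  simpa [Real.sqrt_sq (norm_nonneg _)] using hsq.sqrt
end

section
/- Let M and N be nonempty closed bounded convex subsets of a Hilbert space X and let F : M ∪ N → M ∪ N satisfy (i) F(M) ⊆ N and F(N) ⊆ M, and (ii) ‖Fw − Fz‖ ≤ ‖w − z‖ for all w ∈ M, z ∈ N. Fix ε ∈ (0, 1/2) and sequences η_n, δ_n ∈ (ε, 1−ε). Let w_0 ∈ M and define w_{n+1} = P^n((1−η_n) w_n + η_n P_M F z_n), where z_n = (1−δ_n) w_n + δ_n P_M F w_n and P = P_M ∘ P_N. If F(M) is contained in a compact subset of N and ‖w_n − P_M F z_n‖ → 0, then {w_n} converges to a point w ∈ M_0 satisfying ‖w − Fw‖ = d(M,N). -/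
open Filter Topology

/-!
Write `d = d(M, N)`, `P = P_M ∘ P_N` and `T = P_M ∘ F`. The compactness of `F(M)` and
`w n - T (z n) → 0` give limits `w n → x` and `δ n → t` along an ultrafilter finer than `atTop`.

* `x ∈ M₀`: alternating projections decrease the distance to `N` to `d` at a rate that is uniform
  on bounded sets (`VonNeumann.rate`), and `w (n + 1)` is an `n`-th alternating projection of a
  point of `M`. No a priori point of `M₀` is needed for this.
* `F x` is proximal to `x`: put `x' = P_N x`. Relative nonexpansiveness against `x'` forces
  `T (w n) → T x`, whence `z n → (1 - t) x + t T x`, while `T (z n) → x`. A last comparison with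
  `x'` gives `‖x - T x‖ ≤ t ‖x - T x‖` with `t < 1`, so `T x = x`.
* Convergence of the whole sequence: since `P_M b` and `P_N a` lie in the ball with diameter
  `[a, b]`, one has `‖P_M b - P_N a‖ ≤ ‖b - a‖` (`VonNeumann.cross`). So `‖w n - x'‖` is
  nonincreasing; its limit is `d`, the limit along the ultrafilter. A sequence in `M` whose distance
  to `x'` tends to `d` converges to `P_M x' = x`.
-/

namespace VonNeumann

variable {X : Type*} [NormedAddCommGroup X] [InnerProductSpace ℝ X]

/-- `p` is a metric projection onto `K`. -/
def IsProj (K : Set X) (p : X → X) : Prop :=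
  ∀ x : X, p x ∈ K ∧ ∀ y ∈ K, ‖x - p x‖ ≤ ‖x - y‖

lemma IsProj.inner_le {K : Set X} {p : X → X} (hp : IsProj K p) (hK : Convex ℝ K)
    (x : X) {y : X} (hy : y ∈ K) : inner ℝ (x - p x) (y - p x) ≤ 0 := by
  refine (norm_eq_iInf_iff_real_inner_le_zero hK (hp x).1).1 ?_ y hy
  have : Nonempty K := ⟨⟨y, hy⟩⟩
  refine le_antisymm (le_ciInf fun v => (hp x).2 v v.2) ?_
  exact ciInf_le (f := fun v : K => ‖x - v‖) ⟨0, by rintro _ ⟨v, rfl⟩; exact norm_nonneg _⟩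
    ⟨p x, (hp x).1⟩

/-- Pythagorean inequality for the obtuse angle at the projection. -/
lemma IsProj.sq_le {K : Set X} {p : X → X} (hp : IsProj K p) (hK : Convex ℝ K)
    (x : X) {y : X} (hy : y ∈ K) : ‖y - p x‖ ^ 2 + ‖x - p x‖ ^ 2 ≤ ‖y - x‖ ^ 2 := by
  have h := hp.inner_le hK x hy
  have e : y - x = (y - p x) - (x - p x) := by abel
  rw [e, norm_sub_sq_real (y - p x), real_inner_comm]
  linarith

lemma IsProj.nonexp {K : Set X} {p : X → X} (hp : IsProj K p) (hK : Convex ℝ K)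
    (x y : X) : ‖p x - p y‖ ≤ ‖x - y‖ := by
  have h1 := hp.inner_le hK x (hp y).1
  have h2 := hp.inner_le hK y (hp x).1
  have e : x - y = (p x - p y) + ((x - p x) - (y - p y)) := by abel
  have e1 : inner ℝ (x - p x) (p y - p x) = - inner ℝ (x - p x) (p x - p y) := by
    rw [← inner_neg_right]; congr 1; abel
  have h3 : ‖x - y‖ ^ 2 = ‖p x - p y‖ ^ 2
      + 2 * inner ℝ (p x - p y) ((x - p x) - (y - p y)) + ‖(x - p x) - (y - p y)‖ ^ 2 := by
    rw [e, norm_add_sq_real]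
  rw [inner_sub_right, real_inner_comm, real_inner_comm (y - p y)] at h3
  refine le_of_sq_le_sq ?_ (norm_nonneg _)
  nlinarith [sq_nonneg ‖(x - p x) - (y - p y)‖]

lemma IsProj.continuous {K : Set X} {p : X → X} (hp : IsProj K p) (hK : Convex ℝ K) :
    Continuous p :=
  (LipschitzWith.of_dist_le_mul (K := 1) fun x y => by
    simpa [dist_eq_norm] using hp.nonexp hK x y).continuous

/-- The two projections form a relatively nonexpansive cyclic map: both `p b` and `q a` lie in the
ball whose diameter is the segment `[a, b]`. -/
lemma cross {M N : Set X} {p q : X → X} (hp : IsProj M p) (hM : Convex ℝ M)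
    (hq : IsProj N q) (hN : Convex ℝ N) {a b : X} (ha : a ∈ M) (hb : b ∈ N) :
    ‖p b - q a‖ ≤ ‖b - a‖ := by
  -- An obtuse angle at `m` over `[b, a]` puts `2 m` within `‖b - a‖` of `a + b`.
  have key : ∀ a b m : X, inner ℝ (b - m) (a - m) ≤ 0 → ‖m + m - (a + b)‖ ≤ ‖b - a‖ := by
    intro a b m h
    refine le_of_sq_le_sq ?_ (norm_nonneg _)
    have e1 : m + m - (a + b) = - ((b - m) + (a - m)) := by abel
    have e2 : b - a = (b - m) - (a - m) := by abel
    rw [e1, e2, norm_neg, norm_add_sq_real, norm_sub_sq_real (b - m)]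
    linarith
  have h1 := key a b (p b) (hp.inner_le hM b ha)
  have h2 := key b a (q a) (hq.inner_le hN a hb)
  rw [norm_sub_rev a b, add_comm b a] at h2
  have h3 : ‖(2 : ℝ) • (p b - q a)‖ ≤ ‖b - a‖ + ‖b - a‖ := by
    have e : (2 : ℝ) • (p b - q a)
        = (p b + p b - (a + b)) - (q a + q a - (a + b)) := by
      rw [two_smul]; abel
    rw [e]
    exact (norm_sub_le _ _).trans (add_le_add h1 h2)
  rw [norm_smul] at h3
  norm_num at h3
  linarith

/-- One step of alternating projections, compared with an arbitrary pair `(c, e)`; the sum over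
successive steps telescopes. -/
lemma one_step {M N : Set X} {p q : X → X} (hp : IsProj M p) (hM : Convex ℝ M)
    (hq : IsProj N q) (hN : Convex ℝ N) (a : X) {c e : X} (hc : c ∈ M) (he : e ∈ N) :
    ‖p (q a) - q a‖ ^ 2 + ‖c - p (q a)‖ ^ 2 ≤ ‖c - e‖ ^ 2 + ‖c - a‖ ^ 2 := by
  have h1 := hp.inner_le hM (q a) hc
  have h2 := hq.inner_le hN a he
  set b := q a
  set a' := p b
  have h0 := sq_nonneg ‖(c - a') - (e - b) + (a' - a)‖
  simp only [← real_inner_self_eq_norm_sq, inner_sub_left, inner_sub_right, inner_add_left,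
    inner_add_right] at *
  linarith [real_inner_comm a b, real_inner_comm a a', real_inner_comm a c, real_inner_comm a e,
    real_inner_comm b c, real_inner_comm b e, real_inner_comm b a', real_inner_comm c e,
    real_inner_comm c a', real_inner_comm e a']

/-- Sublinear rate at which alternating projections approach the infimal distance. -/
lemma rate {M N : Set X} {p q : X → X} (hp : IsProj M p) (hM : Convex ℝ M)
    (hq : IsProj N q) (hN : Convex ℝ N) (a : X) {c e : X} (hc : c ∈ M) (he : e ∈ N) (n : ℕ) :
    n * ‖(fun x => p (q x))^[n] a - q ((fun x => p (q x))^[n] a)‖ ^ 2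
      + ‖c - (fun x => p (q x))^[n] a‖ ^ 2 ≤ n * ‖c - e‖ ^ 2 + ‖c - a‖ ^ 2 := by
  induction n with
  | zero => simp
  | succ n ih =>
    rw [Function.iterate_succ_apply']
    cases n with
    | zero =>
      have h := one_step hp hM hq hN a hc he
      have h1 := pow_le_pow_left₀ (norm_nonneg _) ((hq (p (q a))).2 (q a) (hq a).1) 2
      simp only [Function.iterate_zero, id_eq]
      push_cast
      linarith
    | succ n =>
      have ha : (fun x => p (q x))^[n + 1] a ∈ M := by
        rw [Function.iterate_succ_apply']; exact (hp _).1
      set y := (fun x => p (q x))^[n + 1] a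
      have h := one_step hp hM hq hN y hc he
      have h1 := pow_le_pow_left₀ (norm_nonneg _) ((hq (p (q y))).2 (q y) (hq y).1) 2
      have h2 : ‖p (q y) - q y‖ ^ 2 ≤ ‖y - q y‖ ^ 2 := by
        have := (hp (q y)).2 y ha
        rw [norm_sub_rev, norm_sub_rev (q y)] at this
        exact pow_le_pow_left₀ (norm_nonneg _) this 2
      have h3 := mul_le_mul_of_nonneg_left (h1.trans h2) (Nat.cast_nonneg (α := ℝ) (n + 1))
      rw [Nat.cast_add_one (n + 1)]
      nlinarith

/-- If the distance from `u i ∈ M` to `b` tends to a lower bound `d` of the distances to `b`, then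
`u i` tends to the projection of `b`. -/
lemma tendsto_proj {ι : Type*} {l : Filter ι} {M : Set X} {p : X → X} (hp : IsProj M p)
    (hM : Convex ℝ M) {d : ℝ} (hd0 : 0 ≤ d) {b : X} (hd : ∀ y ∈ M, d ≤ ‖y - b‖) {u : ι → X}
    (hu : ∀ i, u i ∈ M) (h : Tendsto (fun i => ‖u i - b‖) l (𝓝 d)) :
    Tendsto u l (𝓝 (p b)) := by
  rw [tendsto_iff_norm_sub_tendsto_zero]
  have h1 : Tendsto (fun i => √(‖u i - b‖ ^ 2 - d ^ 2)) l (𝓝 0) := by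
    have := ((h.pow 2).sub_const (d ^ 2)).sqrt
    simpa using this
  refine squeeze_zero (fun i => norm_nonneg _) (fun i => ?_) h1
  refine Real.le_sqrt_of_sq_le ?_
  have h2 := hp.sq_le hM b (hu i)
  have h3 := pow_le_pow_left₀ hd0 (hd _ (hp b).1) 2
  rw [norm_sub_rev] at h3
  linarith

lemma eq_proj {M : Set X} {p : X → X} (hp : IsProj M p)
    (hM : Convex ℝ M) {d : ℝ} (hd0 : 0 ≤ d) {b : X} (hd : ∀ y ∈ M, d ≤ ‖y - b‖) {u : X}
    (hu : u ∈ M) (h : ‖u - b‖ ≤ d) : u = p b := by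
  have h2 := hp.sq_le hM b hu
  have h3 := pow_le_pow_left₀ hd0 (hd _ (hp b).1) 2
  have h4 := pow_le_pow_left₀ (norm_nonneg _) h 2
  rw [norm_sub_rev] at h3
  have : ‖u - p b‖ ^ 2 ≤ 0 := by linarith
  rw [← sub_eq_zero, ← norm_eq_zero]
  exact pow_eq_zero_iff (two_ne_zero) |>.1 (le_antisymm this (sq_nonneg _))

/-- A point `x` whose distance to `q x` is the infimal distance `d` is fixed by `p ∘ F` as soon as
it is a limit of `w i` and of `p (F (z i))`, where `z i` is a convex combination of `w i` and
`p (F (w i))` whose coefficients converge to some `t` in `[0, 1)`. No continuity of `F` is needed. -/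
lemma fixed_of_tendsto {ι : Type*} {l : Filter ι} [l.NeBot] {M N : Set X} {p q F : X → X}
    (hp : IsProj M p) (hM : Convex ℝ M) (hq : IsProj N q) (hN : Convex ℝ N)
    (hFM : ∀ w ∈ M, F w ∈ N) (hFN : ∀ z ∈ N, F z ∈ M)
    (hF : ∀ w ∈ M, ∀ z ∈ N, ‖F w - F z‖ ≤ ‖w - z‖)
    {d : ℝ} (hd0 : 0 ≤ d) (hd : ∀ a ∈ M, ∀ b ∈ N, d ≤ ‖a - b‖)
    {x : X} (hx : x ∈ M) (hxd : ‖x - q x‖ = d) {w z : ι → X} {δ : ι → ℝ} {t : ℝ}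
    (hwM : ∀ i, w i ∈ M) (hzM : ∀ i, z i ∈ M)
    (hz : ∀ i, z i = (1 - δ i) • w i + δ i • p (F (w i)))
    (hw : Tendsto w l (𝓝 x)) (hTz : Tendsto (fun i => p (F (z i))) l (𝓝 x))
    (hδ : Tendsto δ l (𝓝 t)) (ht0 : 0 ≤ t) (ht1 : t < 1) : p (F x) = x := by
  have hx' := (hq x).1
  have hd' : ∀ a ∈ M, ∀ b ∈ N, d ≤ ‖b - a‖ := fun a ha b hb => by
    rw [norm_sub_rev]; exact hd a ha b hb
  have hTF : F (q x) = p (F x) := eq_proj hp hM hd0 (fun y hy => hd y hy _ (hFM x hx)) (hFN _ hx') (by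
    rw [norm_sub_rev]; exact (hF x hx _ hx').trans hxd.le)
  have hFT : F x = q (F (q x)) := eq_proj hq hN hd0 (fun y hy => hd' _ (hFN _ hx') y hy) (hFM _ hx)
    ((hF x hx _ hx').trans hxd.le)
  have hFw : Tendsto (fun i => F (w i)) l (𝓝 (F x)) := by
    rw [hFT]
    refine tendsto_proj hq hN hd0 (fun y hy => hd' _ (hFN _ hx') y hy) (fun i => hFM _ (hwM i)) ?_
    have h1 : Tendsto (fun i => ‖w i - q x‖) l (𝓝 d) := by
      rw [← hxd]; exact (hw.sub_const _).norm
    exact tendsto_of_tendsto_of_tendsto_of_le_of_le tendsto_const_nhds h1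
      (fun i => hd' _ (hFN _ hx') _ (hFM _ (hwM i))) (fun i => hF _ (hwM i) _ hx')
  have hTw : Tendsto (fun i => p (F (w i))) l (𝓝 (p (F x))) :=
    ((hp.continuous hM).tendsto _).comp hFw
  have hzl : Tendsto z l (𝓝 ((1 - t) • x + t • p (F x))) := by
    rw [funext hz]
    exact ((hδ.const_sub 1).smul hw).add (hδ.smul hTw)
  have hle : ∀ i, ‖p (F (z i)) - p (F x)‖ ^ 2 ≤ ‖z i - q x‖ ^ 2 - d ^ 2 := by
    intro i
    have h1 := hp.sq_le hM (F (z i)) (hFN _ hx')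
    have h2 := pow_le_pow_left₀ hd0 (hd' _ (hp (F (z i))).1 _ (hFM _ (hzM i))) 2
    have h3 := pow_le_pow_left₀ (norm_nonneg _) (hF _ (hzM i) _ hx') 2
    rw [norm_sub_rev (F (z i)) (F (q x))] at h3
    rw [norm_sub_rev, ← hTF]
    linarith
  have hlim : ‖x - p (F x)‖ ^ 2 ≤ ‖(1 - t) • x + t • p (F x) - q x‖ ^ 2 - d ^ 2 :=
    le_of_tendsto_of_tendsto' ((hTz.sub_const _).norm.pow 2)
      (((hzl.sub_const _).norm.pow 2).sub_const _) hle
  -- Both `q x - x` and `F x - p (F x)` have norm `d`, so Cauchy–Schwarz controls their product.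
  have hin : 0 ≤ inner ℝ (p (F x) - x) (q x - x) := by
    have h1 := hq.inner_le hN x (hFM x hx)
    have hk : ‖F x - p (F x)‖ ≤ d := by
      rw [← hTF]; exact (hF x hx _ hx').trans hxd.le
    have hh : ‖q x - x‖ = d := by rw [norm_sub_rev, hxd]
    have h2 : inner ℝ (F x - p (F x)) (q x - x) ≤ d * d :=
      (real_inner_le_norm _ _).trans (mul_le_mul hk hh.le (norm_nonneg _) hd0)
    have h3 : inner ℝ (q x - x) (q x - x) = d * d := by
      rw [real_inner_self_eq_norm_mul_norm, hh]
    have e1 : x - q x = -(q x - x) := by abel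
    have e2 : F x - q x = (F x - p (F x)) + (p (F x) - x) - (q x - x) := by abel
    rw [e1, e2, inner_neg_left, inner_sub_right, inner_add_right, h3,
      real_inner_comm, real_inner_comm (p (F x) - x)] at h1
    linarith
  have hexp : ‖(1 - t) • x + t • p (F x) - q x‖ ^ 2
      = t ^ 2 * ‖x - p (F x)‖ ^ 2 - 2 * (t * inner ℝ (p (F x) - x) (q x - x)) + d ^ 2 := by
    have e : (1 - t) • x + t • p (F x) - q x = t • (p (F x) - x) - (q x - x) := by
      module
    rw [e, norm_sub_sq_real, norm_smul, mul_pow, Real.norm_eq_abs, sq_abs, inner_smul_left,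
      norm_sub_rev (p (F x)) x, norm_sub_rev (q x) x, hxd]
    simp
  have h4 : ‖x - p (F x)‖ ^ 2 ≤ 0 := by
    have h5 := mul_nonneg ht0 hin
    have h6 : 0 < 1 - t ^ 2 := by nlinarith
    nlinarith [sq_nonneg ‖x - p (F x)‖]
  have h7 := pow_eq_zero_iff (two_ne_zero) |>.1 (le_antisymm h4 (sq_nonneg _))
  exact (sub_eq_zero.1 (norm_eq_zero.1 h7)).symm

end VonNeumann

/-- Corollary 2.10: for a cyclic relatively nonexpansive map `F` (`F(M) ⊆ N`,
`F(N) ⊆ M`) on bounded closed convex subsets of a Hilbert space, the iteration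
`w (n+1) = P^[n] ((1 - η n) • w n + η n • P_M (F (z n)))` with
`z n = (1 - δ n) • w n + δ n • P_M (F (w n))` and `P = P_M ∘ P_N` converges to a
best proximity point `x ∈ M₀` of `F`, provided `F '' M` lies in a compact subset
of `N` and `‖w n - P_M (F (z n))‖ → 0`. -/
theorem ishikawa_proj_vonNeumann_tendsto_bestProximityPoint
    {X : Type*} [NormedAddCommGroup X] [InnerProductSpace ℝ X] [CompleteSpace X]
    (M N : Set X)
    (hMne : M.Nonempty) (hMb : Bornology.IsBounded M) (hMcl : IsClosed M)
    (hMconv : Convex ℝ M)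
    (hNne : N.Nonempty) (hNb : Bornology.IsBounded N) (hNcl : IsClosed N)
    (hNconv : Convex ℝ N)
    (F : X → X) (hFM : ∀ w ∈ M, F w ∈ N) (hFN : ∀ z ∈ N, F z ∈ M)
    (hFne : ∀ w ∈ M, ∀ z ∈ N, ‖F w - F z‖ ≤ ‖w - z‖)
    (PM PN : X → X)
    (hPM : ∀ x : X, PM x ∈ M ∧ ∀ y ∈ M, ‖x - PM x‖ ≤ ‖x - y‖)
    (hPN : ∀ x : X, PN x ∈ N ∧ ∀ y ∈ N, ‖x - PN x‖ ≤ ‖x - y‖)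
    (ε : ℝ) (hε : ε ∈ Set.Ioo (0 : ℝ) (1 / 2))
    (η δ : ℕ → ℝ)
    (hη : ∀ n, η n ∈ Set.Ioo ε (1 - ε)) (hδ : ∀ n, δ n ∈ Set.Ioo ε (1 - ε))
    (w z : ℕ → X) (hw0 : w 0 ∈ M)
    (hz : ∀ n, z n = (1 - δ n) • w n + δ n • PM (F (w n)))
    (hw : ∀ n, w (n + 1) = (fun x => PM (PN x))^[n]
      ((1 - η n) • w n + η n • PM (F (z n))))
    (hcpt : ∃ C : Set X, C ⊆ N ∧ IsCompact C ∧ F '' M ⊆ C)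
    (hwz : Tendsto (fun n => ‖w n - PM (F (z n))‖) atTop (𝓝 0)) :
    ∃ x ∈ {x ∈ M | ∃ z ∈ N, ‖x - z‖ = sInf {r : ℝ | ∃ a ∈ M, ∃ b ∈ N, r = ‖a - b‖}},
      Tendsto w atTop (𝓝 x) ∧
      ‖x - F x‖ = sInf {r : ℝ | ∃ a ∈ M, ∃ b ∈ N, r = ‖a - b‖} := by
  have hp : VonNeumann.IsProj M PM := hPM
  have hq : VonNeumann.IsProj N PN := hPN
  set S : Set ℝ := {r : ℝ | ∃ a ∈ M, ∃ b ∈ N, r = ‖a - b‖} with hS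
  set d := sInf S with hd_def
  have hSne : S.Nonempty := by
    obtain ⟨a, ha⟩ := hMne
    obtain ⟨b, hb⟩ := hNne
    exact ⟨_, a, ha, b, hb, rfl⟩
  have hd0 : 0 ≤ d := le_csInf hSne (by rintro _ ⟨a, _, b, _, rfl⟩; exact norm_nonneg _)
  have hd : ∀ a ∈ M, ∀ b ∈ N, d ≤ ‖a - b‖ := fun a ha b hb =>
    csInf_le ⟨0, by rintro _ ⟨a, _, b, _, rfl⟩; exact norm_nonneg _⟩ ⟨a, ha, b, hb, rfl⟩
  have hη' : ∀ n, 0 ≤ η n ∧ 0 ≤ 1 - η n := fun n =>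
    ⟨by linarith [(hη n).1, hε.1], by linarith [(hη n).2, hε.1]⟩
  have hδ' : ∀ n, 0 ≤ δ n ∧ 0 ≤ 1 - δ n := fun n =>
    ⟨by linarith [(hδ n).1, hε.1], by linarith [(hδ n).2, hε.1]⟩
  have hzw : ∀ n, w n ∈ M → z n ∈ M := fun n h => by
    rw [hz n]; exact hMconv h (hPM _).1 (hδ' n).2 (hδ' n).1 (by ring)
  have huw : ∀ n, w n ∈ M → (1 - η n) • w n + η n • PM (F (z n)) ∈ M := fun n h =>
    hMconv h (hPM _).1 (hη' n).2 (hη' n).1 (by ring)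
  have hit : ∀ n, ∀ u ∈ M, (fun x => PM (PN x))^[n] u ∈ M := by
    intro n u hu
    cases n with
    | zero => exact hu
    | succ n => rw [Function.iterate_succ_apply']; exact (hPM _).1
  have hwM : ∀ n, w n ∈ M := by
    intro n
    induction n with
    | zero => exact hw0
    | succ n ih => rw [hw n]; exact hit n _ (huw n ih)
  have hzM : ∀ n, z n ∈ M := fun n => hzw n (hwM n)
  obtain ⟨U, hU⟩ := exists_ultrafilter_le (atTop : Filter ℕ)
  obtain ⟨C, _, hCc, hFC⟩ := hcpt
  obtain ⟨x, hxC, hTz⟩ : ∃ x ∈ PM '' C, Tendsto (fun n => PM (F (z n))) U (𝓝 x) := by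
    refine (hCc.image (hp.continuous hMconv)).ultrafilter_le_nhds (U.map fun n => PM (F (z n))) ?_
    rw [le_principal_iff]
    exact Filter.mem_map.2 (Filter.univ_mem' fun n => ⟨_, hFC ⟨_, hzM n, rfl⟩, rfl⟩)
  obtain ⟨t, ht, htl⟩ : ∃ t ∈ Set.Icc ε (1 - ε), Tendsto δ U (𝓝 t) := by
    refine isCompact_Icc.ultrafilter_le_nhds (U.map δ) ?_
    rw [le_principal_iff]
    exact Filter.mem_map.2 (Filter.univ_mem' fun n => Set.Ioo_subset_Icc_self (hδ n))
  have hxM : x ∈ M := by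
    obtain ⟨c, _, rfl⟩ := hxC
    exact (hPM c).1
  have hwx : Tendsto w U (𝓝 x) := by
    have h1 := (tendsto_zero_iff_norm_tendsto_zero.2 hwz).mono_left hU
    simpa using h1.add hTz
  have hxd : ‖x - PN x‖ = d := by
    refine le_antisymm (le_csInf hSne ?_) (hd x hxM _ (hPN x).1)
    rintro _ ⟨c, hc, e, he, rfl⟩
    obtain ⟨D, hD⟩ := hMb.exists_norm_le
    have hD0 : 0 ≤ D := (norm_nonneg c).trans (hD c hc)
    have hb : ∀ n : ℕ, 2 ≤ n →
        ‖w n - PN (w n)‖ ^ 2 ≤ ‖c - e‖ ^ 2 + (D + D) ^ 2 / ((n : ℝ) + -1) := by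
      intro n hn
      obtain ⟨m, rfl⟩ : ∃ m, n = m + 1 := ⟨n - 1, by omega⟩
      have hm : (0 : ℝ) < m := by exact_mod_cast (by omega : 0 < m)
      have hu := huw m (hwM m)
      have h := VonNeumann.rate hp hMconv hq hNconv
        ((1 - η m) • w m + η m • PM (F (z m))) hc he m
      rw [← hw m] at h
      have h2 : ‖c - ((1 - η m) • w m + η m • PM (F (z m)))‖ ^ 2 ≤ (D + D) ^ 2 :=
        pow_le_pow_left₀ (norm_nonneg _)
          ((norm_sub_le _ _).trans (add_le_add (hD c hc) (hD _ hu))) 2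
      have e1 : (((m + 1 : ℕ) : ℝ) + -1) = m := by push_cast; ring
      rw [e1, ← sub_le_iff_le_add', le_div_iff₀ hm]
      nlinarith [sq_nonneg ‖c - w (m + 1)‖]
    have hl : Tendsto (fun n => ‖w n - PN (w n)‖ ^ 2) U (𝓝 (‖x - PN x‖ ^ 2)) :=
      (hwx.sub (((hq.continuous hNconv).tendsto x).comp hwx)).norm.pow 2
    have hr : Tendsto (fun n : ℕ => ‖c - e‖ ^ 2 + (D + D) ^ 2 / ((n : ℝ) + -1)) U
        (𝓝 (‖c - e‖ ^ 2 + 0)) :=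
      (tendsto_const_nhds.add (tendsto_const_nhds.div_atTop
        (tendsto_atTop_add_const_right _ _ tendsto_natCast_atTop_atTop))).mono_left hU
    rw [add_zero] at hr
    exact le_of_sq_le_sq (le_of_tendsto_of_tendsto hl hr
      (hU ((eventually_ge_atTop 2).mono hb))) (norm_nonneg _)
  have hx' : PN x ∈ N := (hPN x).1
  have hT : PM (F x) = x := VonNeumann.fixed_of_tendsto hp hMconv hq hNconv hFM hFN hFne hd0 hd
    hxM hxd hwM hzM hz hwx hTz htl (by linarith [ht.1, hε.1]) (by linarith [ht.2, hε.1])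
  have hpx : x = PM (PN x) :=
    VonNeumann.eq_proj hp hMconv hd0 (fun y hy => hd y hy _ hx') hxM hxd.le
  have hFx' : F (PN x) = x := by
    refine Eq.trans (b := PM (F x)) ?_ hT
    refine VonNeumann.eq_proj hp hMconv hd0 (fun y hy => hd y hy _ (hFM x hxM)) (hFN _ hx') ?_
    rw [norm_sub_rev]; exact (hFne x hxM _ hx').trans hxd.le
  have hbest : ‖x - F x‖ = d := by
    refine le_antisymm ?_ (hd x hxM _ (hFM x hxM))
    have := hFne x hxM _ hx'
    rw [hFx', hxd] at this
    rwa [norm_sub_rev]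
  have hfejT : ∀ y ∈ M, ‖PM (F y) - PN x‖ ≤ ‖y - PN x‖ := by
    intro y hy
    have h1 := VonNeumann.cross hp hMconv hq hNconv hxM (hFM y hy)
    have h2 := hFne y hy _ hx'
    rw [hFx'] at h2
    exact h1.trans h2
  have hfejP : ∀ n, ∀ y ∈ M, ‖(fun x => PM (PN x))^[n] y - PN x‖ ≤ ‖y - PN x‖ := by
    intro n y hy
    induction n with
    | zero => exact le_rfl
    | succ n ih =>
      rw [Function.iterate_succ_apply']
      refine le_trans ?_ ih
      have hv := hit n y hy
      set v := (fun x => PM (PN x))^[n] y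
      have h1 := VonNeumann.cross hp hMconv hq hNconv hxM (hPN v).1
      have h2 := VonNeumann.cross hp hMconv hq hNconv hv hx'
      rw [← hpx, norm_sub_rev, norm_sub_rev (PN x)] at h2
      exact h1.trans h2
  have hanti : Antitone fun n => ‖w n - PN x‖ := by
    refine antitone_nat_of_succ_le fun n => ?_
    have hball : Convex ℝ (Metric.closedBall (PN x) ‖w n - PN x‖) := convex_closedBall _ _
    have hwb : w n ∈ Metric.closedBall (PN x) ‖w n - PN x‖ := by
      rw [mem_closedBall_iff_norm]
    have hzb : z n ∈ Metric.closedBall (PN x) ‖w n - PN x‖ := by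
      rw [hz n]
      refine hball hwb ?_ (hδ' n).2 (hδ' n).1 (by ring)
      rw [mem_closedBall_iff_norm]; exact hfejT _ (hwM n)
    have hub : (1 - η n) • w n + η n • PM (F (z n)) ∈
        Metric.closedBall (PN x) ‖w n - PN x‖ := by
      refine hball hwb ?_ (hη' n).2 (hη' n).1 (by ring)
      rw [mem_closedBall_iff_norm] at hzb ⊢
      exact (hfejT _ (hzM n)).trans hzb
    rw [mem_closedBall_iff_norm] at hub
    rw [hw n]
    exact (hfejP n _ (huw n (hwM n))).trans hub
  have hlim := tendsto_atTop_ciInf hanti ⟨0, by rintro _ ⟨n, rfl⟩; exact norm_nonneg _⟩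
  have hlimU : Tendsto (fun n => ‖w n - PN x‖) U (𝓝 d) := by
    rw [← hxd]; exact (hwx.sub_const _).norm
  rw [tendsto_nhds_unique (hlim.mono_left hU) hlimU] at hlim
  refine ⟨x, ⟨hxM, PN x, hx', hxd⟩, ?_, hbest⟩
  rw [hpx]
  exact VonNeumann.tendsto_proj hp hMconv hd0 (fun y hy => hd y hy _ hx') hwM hlim
end

section
/- Let K be a nonempty bounded closed convex subset of a uniformly convex Banach space X, let F : K → K be nonexpansive, and let z ∈ K be a fixed point of F. Fix ε ∈ (0, 1/2) and sequences η_n, δ_n ∈ (ε, 1−ε). Let w_0 ∈ K and define w_{n+1} = (1−η_n) w_n + η_n F z_n, where z_n = (1−δ_n) w_n + δ_n F w_n. Then ‖w_n − F z_n‖ → 0 as n → ∞. -/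
/-!
Write `a n = ‖w n - z‖`. Since `F` is nonexpansive and fixes `z`, both `w n - z` and
`F (zseq n) - z` lie in the ball of radius `a n`, and `w (n + 1) - z` is a convex combination of
them with weights bounded away from `0` and `1`; hence `a` is antitone and converges.
By uniform convexity (`exists_norm_combo_le_sub`), whenever `‖w n - F (zseq n)‖ ≥ e` the distance
drops by at least some `c > 0` depending only on `e`, `ε` and `a 0`. Since
`a n - a (n + 1) → 0`, this happens only finitely often.
-/

open Filter Topology

/-- Uniform convexity on balls of variable radius `a ≤ R`: a convex combination, with weights at
least `ε`, of two points at distance at least `e` in the ball of radius `a` lies at a definite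
depth `c` inside that ball, with `c` independent of `a`. -/
theorem exists_norm_combo_le_sub {X : Type*} [NormedAddCommGroup X] [NormedSpace ℝ X]
    [UniformConvexSpace X] {ε e R : ℝ} (hε : 0 < ε) (he : 0 < e) (hR : 0 < R) :
    ∃ c, 0 < c ∧ ∀ a t : ℝ, ∀ x y : X, a ≤ R → ε ≤ t → t ≤ 1 - ε → ‖x‖ ≤ a → ‖y‖ ≤ a →
      e ≤ ‖x - y‖ → ‖(1 - t) • x + t • y‖ ≤ a - c := by
  obtain ⟨d, hd, h⟩ := exists_forall_closed_ball_dist_add_le_two_sub X (div_pos he hR)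
  refine ⟨ε * d * (e / 2), by positivity, fun a t x y haR ht ht' hx hy hxy => ?_⟩
  -- The two points are `e` apart, so the radius cannot be small.
  have ha2 : e / 2 ≤ a := by linarith [norm_sub_le x y]
  have ha : 0 < a := by linarith
  have hsum : ‖x + y‖ ≤ (2 - d) * a := by
    have key : ∀ v : X, ‖a⁻¹ • v‖ = ‖v‖ / a := fun v => by
      rw [norm_smul_of_nonneg (inv_nonneg.2 ha.le), div_eq_inv_mul]
    have h1 : ‖a⁻¹ • x‖ ≤ 1 := by rw [key]; exact (div_le_one ha).2 hx
    have h2 : ‖a⁻¹ • y‖ ≤ 1 := by rw [key]; exact (div_le_one ha).2 hy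
    have h3 : e / R ≤ ‖a⁻¹ • x - a⁻¹ • y‖ := by
      rw [← smul_sub, key]
      exact div_le_div₀ (norm_nonneg _) hxy ha haR
    have h4 := h h1 h2 h3
    rwa [← smul_add, key, div_le_iff₀ ha] at h4
  have hdepth : ε * d * (e / 2) ≤ ε * d * a := by gcongr
  -- Splitting off `ε • (x + y)` leaves nonnegative weights `1 - t - ε` and `t - ε`.
  have hsplit : (1 - t) • x + t • y = ε • (x + y) + (1 - t - ε) • x + (t - ε) • y := by
    module
  calc ‖(1 - t) • x + t • y‖
      ≤ ‖ε • (x + y)‖ + ‖(1 - t - ε) • x‖ + ‖(t - ε) • y‖ := hsplit ▸ norm_add₃_le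
    _ = ε * ‖x + y‖ + (1 - t - ε) * ‖x‖ + (t - ε) * ‖y‖ := by
      rw [norm_smul_of_nonneg hε.le, norm_smul_of_nonneg (by linarith),
        norm_smul_of_nonneg (by linarith)]
    _ ≤ ε * ((2 - d) * a) + (1 - t - ε) * a + (t - ε) * a := by
      have h1 : 0 ≤ 1 - t - ε := by linarith
      have h2 : 0 ≤ t - ε := by linarith
      gcongr
    _ ≤ a - ε * d * (e / 2) := by linarith

/-- For the Ishikawa iteration of a nonexpansive self-map `F` of a nonempty bounded
closed convex subset of a uniformly convex Banach space with fixed point `z ∈ K`,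
one has `‖w n - F (z n)‖ → 0`, where `z n = (1 - δ n) • w n + δ n • F (w n)`. -/
theorem ishikawa_norm_sub_image_inner_step_tendsto_zero
    {X : Type*} [NormedAddCommGroup X] [NormedSpace ℝ X]
    [UniformConvexSpace X] [CompleteSpace X]
    (K : Set X) (hKne : K.Nonempty) (hKb : Bornology.IsBounded K)
    (hKcl : IsClosed K) (hKconv : Convex ℝ K)
    (F : X → X) (hFK : ∀ w ∈ K, F w ∈ K)
    (hFne : ∀ w ∈ K, ∀ z ∈ K, ‖F w - F z‖ ≤ ‖w - z‖)
    (z : X) (hzK : z ∈ K) (hz : F z = z)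
    (ε : ℝ) (hε : ε ∈ Set.Ioo (0 : ℝ) (1 / 2))
    (η δ : ℕ → ℝ)
    (hη : ∀ n, η n ∈ Set.Ioo ε (1 - ε)) (hδ : ∀ n, δ n ∈ Set.Ioo ε (1 - ε))
    (w zseq : ℕ → X) (hw0 : w 0 ∈ K)
    (hzseq : ∀ n, zseq n = (1 - δ n) • w n + δ n • F (w n))
    (hw : ∀ n, w (n + 1) = (1 - η n) • w n + η n • F (zseq n)) :
    Tendsto (fun n => ‖w n - F (zseq n)‖) atTop (𝓝 0) := by
  obtain ⟨hε0, -⟩ := hε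
  have hη0 : ∀ n, 0 ≤ η n ∧ 0 ≤ 1 - η n := fun n =>
    ⟨by linarith [(hη n).1], by linarith [(hη n).2]⟩
  have hδ0 : ∀ n, 0 ≤ δ n ∧ 0 ≤ 1 - δ n := fun n =>
    ⟨by linarith [(hδ n).1], by linarith [(hδ n).2]⟩
  have hzK' : ∀ n, w n ∈ K → zseq n ∈ K := fun n hn => by
    rw [hzseq]
    exact hKconv hn (hFK _ hn) (hδ0 n).2 (hδ0 n).1 (by ring)
  have hwK : ∀ n, w n ∈ K := by
    intro n
    induction n with
    | zero => exact hw0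
    | succ n ih =>
      rw [hw]
      exact hKconv ih (hFK _ (hzK' n ih)) (hη0 n).2 (hη0 n).1 (by ring)
  have hFz : ∀ v ∈ K, ‖F v - z‖ ≤ ‖v - z‖ := fun v hv => by
    simpa only [hz] using hFne v hv z hzK
  have hcombo : ∀ (t r : ℝ) (x y : X), 0 ≤ t → 0 ≤ 1 - t → ‖x‖ ≤ r → ‖y‖ ≤ r →
      ‖(1 - t) • x + t • y‖ ≤ r := by
    intro t r x y h1 h2 hx hy
    have h := (convex_closedBall (0 : X) r) (mem_closedBall_zero_iff.2 hx)
      (mem_closedBall_zero_iff.2 hy) h2 h1 (by ring)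
    exact mem_closedBall_zero_iff.1 h
  have hy : ∀ n, ‖F (zseq n) - z‖ ≤ ‖w n - z‖ := fun n => by
    refine (hFz _ (hzK' n (hwK n))).trans ?_
    have h : zseq n - z = (1 - δ n) • (w n - z) + δ n • (F (w n) - z) := by
      rw [hzseq]; module
    rw [h]
    exact hcombo _ _ _ _ (hδ0 n).1 (hδ0 n).2 le_rfl (hFz _ (hwK n))
  have hstep : ∀ n, w (n + 1) - z = (1 - η n) • (w n - z) + η n • (F (zseq n) - z) := fun n => by
    rw [hw]; module
  have hanti : Antitone fun n => ‖w n - z‖ := antitone_nat_of_succ_le fun n => by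
    rw [hstep]
    exact hcombo _ _ _ _ (hη0 n).1 (hη0 n).2 le_rfl (hy n)
  have hlim := tendsto_atTop_ciInf hanti ⟨0, by rintro _ ⟨n, rfl⟩; exact norm_nonneg _⟩
  have hdiff : Tendsto (fun n => ‖w n - z‖ - ‖w (n + 1) - z‖) atTop (𝓝 0) := by
    simpa only [sub_self, Function.comp_def] using hlim.sub (hlim.comp (tendsto_add_atTop_nat 1))
  rw [Metric.tendsto_nhds]
  intro e he
  -- The radius bound is `‖w 0 - z‖ + 1` because `w 0 = z` is possible.
  obtain ⟨c, hc, hcx⟩ := exists_norm_combo_le_sub (X := X) hε0 he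
    (show 0 < ‖w 0 - z‖ + 1 by positivity)
  filter_upwards [hdiff.eventually_lt_const hc] with n hn
  rw [Real.dist_0_eq_abs, abs_norm]
  by_contra! hge
  have h := hcx ‖w n - z‖ (η n) (w n - z) (F (zseq n) - z)
    ((hanti (Nat.zero_le n)).trans (by simp)) (hη n).1.le (hη n).2.le le_rfl (hy n)
    (by rwa [sub_sub_sub_cancel_right])
  rw [← hstep] at h
  linarith
end
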